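/- arXiv:2409.18063 — 5 statements merged into one kernel-verified Lean document; each statement's English description precedes it below -/
import Mathlib

section
/- Let X be a finite type of variables, let R be a binary relation on integer valuations X → ℤ, and let r ∈ MvPolynomial X ℚ be a polynomial with rational coefficients. Suppose (i) for all x, y : X → ℤ with R x y, we have r(y) ≤ r(x) and 0 ≤ r(x) (evaluating r at integer points, with integers cast into ℚ), and (ii) the restricted relation R' defined by R' x y ↔ (R x y ∧ r(x) = r(y)) has no infinite execution. Then R has no infinite execution. -/
/-!
A polynomial with rational coefficients has a common denominator, so its values at integer points
all lie in one cyclic subgroup of `ℚ`, and a bounded-below subset of such a subgroup is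
well-founded. Hence a quasi-ranking function is eventually constant along any infinite execution,
and the tail of that execution stays in a single level set.
-/

section Termination

variable {S β : Type*}

/-- Termination of a transition relation, the property that quasi-ranking functions certify:
there is no infinite execution, from any initial state. -/
def Terminates (R : S → S → Prop) : Prop :=
  ¬ ∃ v : ℕ → S, ∀ i, R (v i) (v (i + 1))

variable [PartialOrder β]

theorem eventually_const_of_antitone_of_isWF {s : Set β} (hs : s.IsWF) {u : ℕ → β}
    (hu : Antitone u) (hmem : ∀ i, u i ∈ s) : ∃ n, ∀ m, n ≤ m → u n = u m := by
  have : WellFoundedLT s := ⟨hs⟩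
  let u' : ℕ → s := fun i ↦ ⟨u i, hmem i⟩
  obtain ⟨n, hn⟩ := WellFoundedLT.antitone_chain_condition (f := u') fun _ _ hij ↦ hu hij
  exact ⟨n, fun m hm ↦ congrArg Subtype.val (hn m hm)⟩

theorem Terminates.of_levelSets {R : S → S → Prop} {f : S → β} {s : Set β} (hs : s.IsWF)
    (hmem : ∀ x y, R x y → f x ∈ s) (hle : ∀ x y, R x y → f y ≤ f x)
    (hlevel : Terminates fun x y ↦ R x y ∧ f x = f y) : Terminates R := by
  rintro ⟨v, hv⟩
  have hanti : Antitone (f ∘ v) := antitone_nat_of_succ_le fun i ↦ hle _ _ (hv i)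
  obtain ⟨n, hconst⟩ := eventually_const_of_antitone_of_isWF hs hanti fun i ↦ hmem _ _ (hv i)
  refine hlevel ⟨fun i ↦ v (n + i), fun i ↦ ⟨hv (n + i), ?_⟩⟩
  exact (hconst (n + i) (by lia)).symm.trans (hconst (n + (i + 1)) (by lia))

end Termination

theorem isWF_of_bddBelow_of_subset_zmultiples {G : Type*} [AddCommGroup G] [LinearOrder G]
    [IsOrderedAddMonoid G] [Archimedean G] {s : Set G} {a : G} (hs : BddBelow s)
    (hsa : s ⊆ AddSubgroup.zmultiples a) : s.IsWF := by
  wlog ha : 0 < a generalizing a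
  · obtain rfl | ha := (not_lt.mp ha).eq_or_lt
    · exact (Set.finite_singleton (0 : G)).isWF.mono (by simpa using hsa)
    · exact this (a := -a) (by rwa [AddSubgroup.zmultiples_neg]) (neg_pos.mpr ha)
  obtain ⟨b, hb⟩ := hs
  obtain ⟨n, hn⟩ := Archimedean.arch (-b) ha
  have hmono : Monotone fun k : ℤ ↦ k • a := zsmul_left_mono ha.le
  have hIci : (Set.Ici (-n : ℤ)).IsPWO := bddBelow_Ici.isWF.isPWO
  refine (hIci.image_of_monotone hmono).isWF.mono fun t ht ↦ ?_
  obtain ⟨k, rfl⟩ := hsa ht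
  refine ⟨k, (zsmul_le_zsmul_iff_left ha).mp ?_, rfl⟩
  calc (-n : ℤ) • a = -(n • a) := by rw [neg_zsmul, natCast_zsmul]
    _ ≤ b := neg_le.mp hn
    _ ≤ k • a := hb ht

section CommonDenominator

open MvPolynomial

variable {σ A K : Type*} [CommRing A] [CommRing K] [Algebra A K]

attribute [local instance] algebraMvPolynomial

theorem exists_smul_eq_map_algebraMap (M : Submonoid A) [IsLocalization M K]
    (p : MvPolynomial σ K) :
    ∃ d ∈ M, ∃ q : MvPolynomial σ A, d • p = map (algebraMap A K) q := by
  obtain ⟨⟨q, _, d, hd, rfl⟩, hq⟩ := IsLocalization.surj (M.map (C (σ := σ))) p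
  refine ⟨d, hd, q, ?_⟩
  rw [algebraMap_def, map_C] at hq
  rw [← hq, mul_comm, ← smul_eq_C_mul, algebraMap_smul]

theorem exists_forall_aeval_mem_span_singleton (M : Submonoid A) [IsLocalization M K]
    (p : MvPolynomial σ K) :
    ∃ a : K, ∀ x : σ → A, aeval (algebraMap A K ∘ x) p ∈ Submodule.span A {a} := by
  obtain ⟨d, hd, q, hq⟩ := exists_smul_eq_map_algebraMap M p
  refine ⟨IsLocalization.mk' K 1 ⟨d, hd⟩, fun x ↦ Submodule.mem_span_singleton.mpr ⟨aeval x q, ?_⟩⟩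
  rw [IsLocalization.smul_mk'_one, IsLocalization.mk'_eq_iff_eq_mul]
  calc algebraMap A K (aeval x q)
    _ = aeval (algebraMap A K ∘ x) (map (algebraMap A K) q) := by
      rw [aeval_map_algebraMap, aeval_algebraMap_apply]
    _ = aeval (algebraMap A K ∘ x) (d • p) := by rw [hq]
    _ = aeval (algebraMap A K ∘ x) p * algebraMap A K d := by
      rw [← algebraMap_smul K d p, map_smul, smul_eq_mul, mul_comm]

end CommonDenominator

theorem quasi_rf_implies_termination_over_Z_general {X : Type*} {R : (X → ℤ) → (X → ℤ) → Prop}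
    {r : MvPolynomial X ℚ}
    (hq : ∀ x y : X → ℤ, R x y →
      MvPolynomial.aeval (fun i => (y i : ℚ)) r ≤ MvPolynomial.aeval (fun i => (x i : ℚ)) r ∧
      0 ≤ MvPolynomial.aeval (fun i => (x i : ℚ)) r)
    (hres : Terminates fun x y ↦ R x y ∧
      MvPolynomial.aeval (fun i => (x i : ℚ)) r = MvPolynomial.aeval (fun i => (y i : ℚ)) r) :
    Terminates R := by
  obtain ⟨a, ha⟩ := exists_forall_aeval_mem_span_singleton (nonZeroDivisors ℤ) r
  have hwf : (Set.Ici 0 ∩ AddSubgroup.zmultiples a : Set ℚ).IsWF :=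
    isWF_of_bddBelow_of_subset_zmultiples (bddBelow_Ici.mono Set.inter_subset_left)
      Set.inter_subset_right
  refine Terminates.of_levelSets hwf (fun x y hxy ↦ ⟨(hq x y hxy).2, ?_⟩)
    (fun x y hxy ↦ (hq x y hxy).1) hres
  exact Submodule.mem_span_singleton.mp (ha x)

/-- Lemma 2: a quasi-ranking function whose level sets cut the relation down to
a terminating relation certifies termination over ℤ. -/
theorem quasi_rf_implies_termination_over_Z
    {X : Type*} [Fintype X]
    (R : (X → ℤ) → (X → ℤ) → Prop)
    (r : MvPolynomial X ℚ)
    (hq : ∀ x y : X → ℤ, R x y →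
      MvPolynomial.aeval (fun i => (y i : ℚ)) r ≤ MvPolynomial.aeval (fun i => (x i : ℚ)) r ∧
      0 ≤ MvPolynomial.aeval (fun i => (x i : ℚ)) r)
    (hres : ¬ ∃ v : ℕ → (X → ℤ), ∀ i : ℕ,
      R (v i) (v (i + 1)) ∧
      MvPolynomial.aeval (fun j => ((v i) j : ℚ)) r =
        MvPolynomial.aeval (fun j => ((v (i + 1)) j : ℚ)) r) :
    ¬ ∃ v : ℕ → (X → ℤ), ∀ i : ℕ, R (v i) (v (i + 1)) :=
  quasi_rf_implies_termination_over_Z_general hq hres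
end

section
/- Let X be a finite type of variables, let R be a binary relation on integer valuations X → ℤ, let n : ℕ, and let r : Fin n → MvPolynomial X ℚ be a sequence of polynomials with rational coefficients. Suppose (i) for every i : Fin n and all x, y : X → ℤ, if R x y and rⱼ(x) = rⱼ(y) for all j < i, then rᵢ(y) ≤ rᵢ(x) and 0 ≤ rᵢ(x) (evaluating at integer points cast into ℚ); and (ii) there are no x, y : X → ℤ with R x y and rᵢ(x) = rᵢ(y) for all i : Fin n. Then R has no infinite execution, i.e., there is no sequence v : ℕ → (X → ℤ) with R (v i) (v (i+1)) for all i. -/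
/-!
Clearing denominators, the values of a rational polynomial at integer points are integer multiples
of a single rational number, so the nonnegative ones among them are well-ordered. Along an infinite
execution the ranking functions then become constant one after the other: once all those preceding
`f i` are constant, `f i` is nonnegative and non-increasing with values in a well-ordered set, so it
is eventually constant too. As there are finitely many of them, some transition preserves them all,
a contradiction.
-/

open Filter

theorem eventually_eq_succ_of_isWF {α : Type*} [PartialOrder α] {s : Set α} (hs : s.IsWF)
    {a : ℕ → α} (hmem : ∀ᶠ k in atTop, a k ∈ s) (hle : ∀ᶠ k in atTop, a (k + 1) ≤ a k) :
    ∀ᶠ k in atTop, a k = a (k + 1) := by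
  obtain ⟨N, hN⟩ := eventually_atTop.mp (hmem.and hle)
  have : WellFoundedLT s := ⟨hs⟩
  let tail (k : ℕ) : s := ⟨a (N + k), (hN _ (Nat.le_add_right N k)).1⟩
  have tail_antitone : Antitone tail :=
    antitone_nat_of_succ_le fun k ↦ (hN _ (Nat.le_add_right N k)).2
  obtain ⟨m, hm⟩ := WellFoundedLT.antitone_chain_condition tail_antitone
  refine eventually_atTop.mpr ⟨N + m, fun k hk ↦ ?_⟩
  obtain ⟨t, rfl⟩ := Nat.exists_eq_add_of_le hk
  have tail_eq : tail (m + t) = tail (m + t + 1) :=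
    (hm _ (by lia)).symm.trans (hm _ (by lia))
  simpa only [tail, Subtype.mk.injEq, add_assoc] using tail_eq

/-- A weak lexicographic ranking function for the transition relation `R`: each component `f i` is
a quasi-ranking function for the transitions preserving all earlier components, and no transition
preserves every component. Nonnegativity is only required at the source of a transition. -/
structure IsWeakLexRanking {S ι α : Type*} [LT ι] [LE α] [Zero α] (R : S → S → Prop)
    (f : ι → S → α) : Prop where
  le : ∀ i x y, R x y → (∀ j < i, f j x = f j y) → f i y ≤ f i x
  nonneg : ∀ i x y, R x y → (∀ j < i, f j x = f j y) → 0 ≤ f i x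
  not_forall_eq : ∀ x y, R x y → ¬ ∀ i, f i x = f i y

namespace IsWeakLexRanking

variable {S ι α : Type*} [Finite ι] [Preorder ι] [PartialOrder α] [Zero α]
  {R : S → S → Prop} {f : ι → S → α}

theorem eventually_eq_succ (hf : IsWeakLexRanking R f)
    (hwf : ∀ i, (Set.range (f i) ∩ Set.Ici 0).IsWF) {v : ℕ → S} (hv : ∀ k, R (v k) (v (k + 1)))
    (i : ι) : ∀ᶠ k in atTop, f i (v k) = f i (v (k + 1)) := by
  induction i using WellFoundedLT.induction with
  | ind i ih =>
    have preserved : ∀ᶠ k in atTop, ∀ j < i, f j (v k) = f j (v (k + 1)) :=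
      eventually_all.mpr fun j ↦ eventually_imp_distrib_left.mpr (ih j)
    exact eventually_eq_succ_of_isWF (hwf i)
      (preserved.mono fun k hk ↦ ⟨Set.mem_range_self _, hf.nonneg i _ _ (hv k) hk⟩)
      (preserved.mono fun k hk ↦ hf.le i _ _ (hv k) hk)

theorem no_infinite_execution (hf : IsWeakLexRanking R f)
    (hwf : ∀ i, (Set.range (f i) ∩ Set.Ici 0).IsWF) :
    ¬ ∃ v : ℕ → S, ∀ k, R (v k) (v (k + 1)) := by
  rintro ⟨v, hv⟩
  obtain ⟨k, hk⟩ := (eventually_all.mpr (hf.eventually_eq_succ hwf hv)).exists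
  exact hf.not_forall_eq _ _ (hv k) hk

end IsWeakLexRanking

theorem isWF_zmultiples_inter_Ici_zero {α : Type*} [AddCommGroup α] [LinearOrder α]
    [IsOrderedAddMonoid α] (c : α) : ((AddSubgroup.zmultiples c : Set α) ∩ Set.Ici 0).IsWF := by
  have natMultiples_isWF : (Set.range fun n : ℕ ↦ n • |c|).IsWF := by
    rw [← Set.image_univ]
    exact ((Set.isPWO_of_wellQuasiOrderedLE _).image_of_monotone
      fun _ _ h ↦ nsmul_le_nsmul_left (abs_nonneg c) h).isWF
  refine natMultiples_isWF.mono ?_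
  rintro _ ⟨⟨z, rfl⟩, hz⟩
  refine ⟨z.natAbs, ?_⟩
  calc z.natAbs • |c| = |z| • |c| := by rw [Int.abs_eq_natAbs, natCast_zsmul]
    _ = |z • c| := (abs_zsmul z c).symm
    _ = z • c := abs_of_nonneg hz

attribute [local instance] MvPolynomial.algebraMvPolynomial in
theorem exists_aeval_algebraMap_mem_span_singleton {A K X : Type*} [CommRing A] [CommRing K]
    [Algebra A K] (M : Submonoid A) [IsLocalization M K] (p : MvPolynomial X K) :
    ∃ c : K, ∀ x : X → A,
      MvPolynomial.aeval (algebraMap A K ∘ x) p ∈ Submodule.span A {c} := by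
  obtain ⟨⟨q, _, b, hb, rfl⟩, hpq⟩ := IsLocalization.surj (M.map (MvPolynomial.C (σ := X))) p
  refine ⟨IsLocalization.mk' K 1 ⟨b, hb⟩, fun x ↦
    Submodule.mem_span_singleton.mpr ⟨MvPolynomial.aeval x q, ?_⟩⟩
  have eval_eq : MvPolynomial.aeval (algebraMap A K ∘ x) p * algebraMap A K b =
      algebraMap A K (MvPolynomial.aeval x q) := by
    simpa only [map_mul, MvPolynomial.algebraMap_def, MvPolynomial.map_C, MvPolynomial.aeval_C,
      Algebra.algebraMap_self_apply, MvPolynomial.aeval_map_algebraMap,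
      MvPolynomial.aeval_algebraMap_apply]
      using congrArg (MvPolynomial.aeval (algebraMap A K ∘ x)) hpq
  rw [Algebra.smul_def, ← eval_eq, mul_assoc, IsLocalization.mk'_spec'_mk, map_one, mul_one]

theorem isWF_range_aeval_intCast_inter_Ici_zero {X : Type*} (p : MvPolynomial X ℚ) :
    (Set.range (fun x : X → ℤ ↦ MvPolynomial.aeval (fun k ↦ (x k : ℚ)) p) ∩ Set.Ici 0).IsWF := by
  obtain ⟨c, hc⟩ := exists_aeval_algebraMap_mem_span_singleton (nonZeroDivisors ℤ) p
  refine (isWF_zmultiples_inter_Ici_zero c).mono (Set.inter_subset_inter_left _ ?_)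
  rintro _ ⟨x, rfl⟩
  exact AddSubgroup.mem_zmultiples_iff.mpr (Submodule.mem_span_singleton.mp (hc x))

theorem wlprf_implies_termination_over_Z_general {X ι : Type*} [Finite ι] [Preorder ι]
    {R : (X → ℤ) → (X → ℤ) → Prop} {r : ι → MvPolynomial X ℚ}
    (hr : IsWeakLexRanking R fun i x ↦ MvPolynomial.aeval (fun k ↦ (x k : ℚ)) (r i)) :
    ¬ ∃ v : ℕ → (X → ℤ), ∀ i : ℕ, R (v i) (v (i + 1)) :=
  hr.no_infinite_execution fun i ↦ isWF_range_aeval_intCast_inter_Ici_zero (r i)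

/-- Lemma 3: a weak lexicographic polynomial ranking function implies
termination over ℤ. -/
theorem wlprf_implies_termination_over_Z
    {X : Type*} [Fintype X]
    (R : (X → ℤ) → (X → ℤ) → Prop)
    (n : ℕ)
    (r : Fin n → MvPolynomial X ℚ)
    (hquasi : ∀ i : Fin n, ∀ x y : X → ℤ, R x y →
      (∀ j : Fin n, j < i →
        MvPolynomial.aeval (fun k => (x k : ℚ)) (r j) =
          MvPolynomial.aeval (fun k => (y k : ℚ)) (r j)) →
      MvPolynomial.aeval (fun k => (y k : ℚ)) (r i) ≤
        MvPolynomial.aeval (fun k => (x k : ℚ)) (r i) ∧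
      0 ≤ MvPolynomial.aeval (fun k => (x k : ℚ)) (r i))
    (hcover : ¬ ∃ x y : X → ℤ, R x y ∧ ∀ i : Fin n,
      MvPolynomial.aeval (fun k => (x k : ℚ)) (r i) =
        MvPolynomial.aeval (fun k => (y k : ℚ)) (r i)) :
    ¬ ∃ v : ℕ → (X → ℤ), ∀ i : ℕ, R (v i) (v (i + 1)) :=
  wlprf_implies_termination_over_Z_general
    { le := fun i x y h hlt ↦ (hquasi i x y h hlt).1
      nonneg := fun i x y h hlt ↦ (hquasi i x y h hlt).2
      not_forall_eq := fun x y h heq ↦ hcover ⟨x, y, h, heq⟩ }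
end

section
/- Define the binary relation T on ℝ × ℝ by T (n, z) (n', z') ↔ (0 ≤ z ∧ 2 ≤ n ∧ n' = 2·n ∧ z' ≤ z ∧ n·z' = n·z − 1). Then: (i) for every transition, z strictly decreases, i.e., T (n,z) (n',z') implies z' < z (in particular there is no transition of T with z' = z, and z is nonnegative and non-increasing along all transitions); and yet (ii) T has an infinite execution: there exists f : ℕ → ℝ × ℝ with T (f i) (f (i+1)) for all i ∈ ℕ (for instance f i = (2^{i+1}, 2^{−i})). -/
/-- The paper's nonlinear counterexample transition relation over the reals:
state is a pair (n, z). -/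
def counterT : ℝ × ℝ → ℝ × ℝ → Prop := fun p q =>
  0 ≤ p.2 ∧ 2 ≤ p.1 ∧ q.1 = 2 * p.1 ∧ q.2 ≤ p.2 ∧ p.1 * q.2 = p.1 * p.2 - 1

/-!
A transition is the deterministic step `(n, z) ↦ (2 * n, z - 1 / n)`. Hence `z` strictly decreases,
but the decrements halve at every step, so their sum is finite. The product `n * z` evolves as
`x ↦ 2 * (x - 1)`, whose fixed point is `2`: an execution starting on the hyperbola `n * z = 2`
stays on it, and `z` remains positive forever.
-/

theorem counterT_iff {p q : ℝ × ℝ} :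
    counterT p q ↔ 0 ≤ p.2 ∧ 2 ≤ p.1 ∧ q = (2 * p.1, p.2 - 1 / p.1) := by
  constructor
  · rintro ⟨hz, hn, hdouble, -, hstep⟩
    have hn₀ : p.1 ≠ 0 := by positivity
    refine ⟨hz, hn, Prod.ext hdouble (mul_left_cancel₀ hn₀ ?_)⟩
    rw [hstep, mul_sub, mul_one_div_cancel hn₀]
  · rintro ⟨hz, hn, rfl⟩
    have hn₀ : 0 < p.1 := by positivity
    refine ⟨hz, hn, rfl, sub_le_self _ (one_div_pos.2 hn₀).le, ?_⟩
    rw [mul_sub, mul_one_div_cancel hn₀.ne']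

namespace counterT

theorem snd_lt {p q : ℝ × ℝ} (h : counterT p q) : q.2 < p.2 := by
  obtain ⟨-, hn, rfl⟩ := counterT_iff.1 h
  exact sub_lt_self _ (one_div_pos.2 (by positivity))

theorem double_half_of_mul_eq_two {n z : ℝ} (hn : 2 ≤ n) (hnz : n * z = 2) :
    counterT (n, z) (2 * n, z / 2) := by
  have hn₀ : 0 < n := by positivity
  have hz : 0 < z := pos_of_mul_pos_right (hnz ▸ two_pos) hn₀.le
  have hdecrement : 1 / n = z / 2 := by
    rw [div_eq_div_iff hn₀.ne' two_ne_zero, one_mul, mul_comm, hnz]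
  refine counterT_iff.2 ⟨hz.le, hn, ?_⟩
  rw [hdecrement, sub_half]

theorem two_pow_mul_div_two_pow {n z : ℝ} (hn : 2 ≤ n) (hnz : n * z = 2) (i : ℕ) :
    counterT (2 ^ i * n, z / 2 ^ i) (2 ^ (i + 1) * n, z / 2 ^ (i + 1)) := by
  have hn_le : n ≤ 2 ^ i * n :=
    le_mul_of_one_le_left (by positivity) (one_le_pow₀ one_le_two)
  have hinvariant : 2 ^ i * n * (z / 2 ^ i) = 2 := by
    calc 2 ^ i * n * (z / 2 ^ i) = n * z := by field_simp
      _ = 2 := hnz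
  rw [pow_succ', mul_assoc, mul_comm (2 : ℝ) (2 ^ i), ← div_div]
  exact double_half_of_mul_eq_two (hn.trans hn_le) hinvariant

end counterT

/-- z strictly decreases along every transition of `counterT` (so `counterT`
restricted to z' = z is empty, and z is nonnegative and non-increasing), and yet
`counterT` admits an infinite execution. -/
theorem counterexample_weak_lex_over_reals :
    (∀ p q : ℝ × ℝ, counterT p q → q.2 < p.2) ∧
    (∃ f : ℕ → ℝ × ℝ, ∀ i : ℕ, counterT (f i) (f (i + 1))) :=
  ⟨fun _ _ => counterT.snd_lt, fun i => (2 ^ i * 2, 1 / 2 ^ i),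
    counterT.two_pow_mul_div_two_pow le_rfl (mul_one 2)⟩
end

section
/- Let X be a finite type of variables, let R be a binary relation on integer valuations X → ℤ, and let P be a finite set of polynomials in MvPolynomial X ℚ such that every p ∈ P satisfies: for all x, y with R x y, p(y) ≤ p(x) and 0 ≤ p(x) (evaluating at integer points cast into ℚ). If R has an infinite execution, then the restricted relation R' defined by R' x y ↔ (R x y ∧ ∀ p ∈ P, p(x) = p(y)) also has an infinite execution. More precisely, for any infinite execution f of R there exists N such that for all i ≥ N and all p ∈ P, p(f i) = p(f (i+1)). -/
/-!
A rational polynomial has finitely many coefficients, so a single nonzero integer `d` clears the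
denominators of all its values at integer points. Along an infinite execution, the values of a
quasi-ranking polynomial, scaled by `|d|`, are therefore a nonincreasing sequence of natural
numbers, which is eventually constant. Finitely many polynomials have a common index of
stabilization, and the tail of the execution from that index on preserves all of them.
-/

open Filter IsLocalization

theorem exists_isInteger_smul_aeval {A K X : Type*} [CommSemiring A] [CommSemiring K]
    [Algebra A K] (M : Submonoid A) [IsLocalization M K] (p : MvPolynomial X K) :
    ∃ d : M, ∀ x : X → A,
      IsInteger A ((d : A) • MvPolynomial.aeval (fun i => algebraMap A K (x i)) p) := by
  obtain ⟨d, hd⟩ := exist_integer_multiples M p.support fun m => p.coeff m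
  refine ⟨d, fun x => ?_⟩
  rw [MvPolynomial.aeval_def, MvPolynomial.eval₂_eq, Finset.smul_sum]
  refine Subsemiring.sum_mem _ fun m hm => ?_
  have monomial_isInteger : IsInteger A (∏ i ∈ m.support, algebraMap A K (x i) ^ m i) :=
    ⟨∏ i ∈ m.support, x i ^ m i, by simp only [map_prod, map_pow]⟩
  rw [Algebra.algebraMap_self_apply, ← smul_mul_assoc]
  exact isInteger_mul (hd m hm) monomial_isInteger

theorem eventuallyConst_of_antitone_of_isInteger_smul {K : Type*} [CommRing K] [LinearOrder K]
    [IsStrictOrderedRing K] {u : ℕ → K} {d : ℤ} (hu : Antitone u) (u_nonneg : ∀ i, 0 ≤ u i)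
    (hd : d ≠ 0) (hint : ∀ i, IsInteger ℤ (d • u i)) :
    EventuallyConst u atTop := by
  choose z hz using hint
  have natAbs_z (i : ℕ) : ((z i).natAbs : K) = |(d : K)| * u i := by
    have cast_z : (z i : K) = d * u i := by simpa using hz i
    rw [Nat.cast_natAbs, Int.cast_abs, cast_z, abs_mul, abs_of_nonneg (u_nonneg i)]
  have antitone_natAbs_z : Antitone fun i => (z i).natAbs := fun i j hij => by
    rw [← Nat.cast_le (α := K), natAbs_z, natAbs_z]
    exact mul_le_mul_of_nonneg_left (hu hij) (abs_nonneg _)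
  obtain ⟨N, hN⟩ := WellFoundedLT.antitone_chain_condition antitone_natAbs_z
  refine eventuallyConst_atTop.2 ⟨N, fun i hi => ?_⟩
  have abs_d_ne_zero : |(d : K)| ≠ 0 := abs_ne_zero.2 (Int.cast_ne_zero.2 hd)
  exact mul_left_cancel₀ abs_d_ne_zero (by rw [← natAbs_z, ← natAbs_z, hN i hi])

/-- An infinite execution of the transition relation `R`, as a sequence of states. -/
def IsExecution {S : Type*} (R : S → S → Prop) (f : ℕ → S) : Prop :=
  ∀ i, R (f i) (f (i + 1))

/-- A quasi-ranking function for the transition relation `R`: it does not increase along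
transitions, and it is nonnegative at their sources (nothing is required at a state without
successors). The paper's polynomials are encoded by their evaluation functions. -/
def IsQuasiRanking {S K : Type*} [LE K] [Zero K] (R : S → S → Prop) (r : S → K) : Prop :=
  ∀ x y, R x y → r y ≤ r x ∧ 0 ≤ r x

namespace IsQuasiRanking

variable {S K : Type*} {R : S → S → Prop} {r : S → K} {f : ℕ → S}

theorem antitone_comp [Preorder K] [Zero K] (hr : IsQuasiRanking R r) (hf : IsExecution R f) :
    Antitone (r ∘ f) :=
  antitone_nat_of_succ_le fun i => (hr _ _ (hf i)).1

theorem comp_nonneg [LE K] [Zero K] (hr : IsQuasiRanking R r) (hf : IsExecution R f) (i : ℕ) :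
    0 ≤ (r ∘ f) i :=
  (hr _ _ (hf i)).2

theorem eventuallyConst_comp_aeval {X : Type*} {R : (X → ℤ) → (X → ℤ) → Prop}
    {p : MvPolynomial X ℚ} {f : ℕ → X → ℤ}
    (hp : IsQuasiRanking R fun x => MvPolynomial.aeval (fun i => (x i : ℚ)) p)
    (hf : IsExecution R f) :
    EventuallyConst (fun n => MvPolynomial.aeval (fun i => (f n i : ℚ)) p) atTop := by
  obtain ⟨d, hd⟩ := exists_isInteger_smul_aeval (nonZeroDivisors ℤ) p
  exact eventuallyConst_of_antitone_of_isInteger_smul (hp.antitone_comp hf) (hp.comp_nonneg hf)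
    (nonZeroDivisors.coe_ne_zero d) fun i => hd (f i)

end IsQuasiRanking

theorem exists_forall_ge_aeval_eq_succ {X : Type*} {R : (X → ℤ) → (X → ℤ) → Prop}
    {P : Finset (MvPolynomial X ℚ)}
    (hP : ∀ p ∈ P, IsQuasiRanking R fun x => MvPolynomial.aeval (fun i => (x i : ℚ)) p)
    {f : ℕ → X → ℤ} (hf : IsExecution R f) :
    ∃ N, ∀ i ≥ N, ∀ p ∈ P,
      MvPolynomial.aeval (fun j => (f i j : ℚ)) p =
        MvPolynomial.aeval (fun j => (f (i + 1) j : ℚ)) p := by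
  refine eventually_atTop.1 ((eventually_all_finset P).2 fun p hp => eventually_atTop.2 ?_)
  obtain ⟨N, hN⟩ := eventuallyConst_atTop_nat.1 ((hP p hp).eventuallyConst_comp_aeval hf)
  exact ⟨N, fun i hi => (hN i hi).symm⟩

theorem quasi_rf_stabilization_general {X : Type*} {R : (X → ℤ) → (X → ℤ) → Prop}
    {P : Finset (MvPolynomial X ℚ)}
    (hP : ∀ p ∈ P, IsQuasiRanking R fun x => MvPolynomial.aeval (fun i => (x i : ℚ)) p) :
    ((∃ f, IsExecution R f) →
      ∃ g, IsExecution (fun x y => R x y ∧ ∀ p ∈ P,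
        MvPolynomial.aeval (fun j => (x j : ℚ)) p =
          MvPolynomial.aeval (fun j => (y j : ℚ)) p) g) ∧
    (∀ f, IsExecution R f → ∃ N, ∀ i ≥ N, ∀ p ∈ P,
      MvPolynomial.aeval (fun j => (f i j : ℚ)) p =
        MvPolynomial.aeval (fun j => (f (i + 1) j : ℚ)) p) := by
  refine ⟨?_, fun f hf => exists_forall_ge_aeval_eq_succ hP hf⟩
  rintro ⟨f, hf⟩
  obtain ⟨N, hN⟩ := exists_forall_ge_aeval_eq_succ hP hf
  exact ⟨fun i => f (N + i), fun i => ⟨hf (N + i), hN (N + i) (Nat.le_add_right N i)⟩⟩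

/-- Stabilization of finitely many quasi-ranking functions along infinite integer
executions: if every member of the finite set `P` is a quasi-ranking function for `R`,
then (a) whenever `R` has an infinite execution, so does the restriction of `R` to
transitions preserving every `p ∈ P`; and (b) more precisely, along any infinite
execution of `R` the values of all `p ∈ P` are eventually constant. -/
theorem quasi_rf_stabilization
    {X : Type*} [Fintype X]
    (R : (X → ℤ) → (X → ℤ) → Prop)
    (P : Finset (MvPolynomial X ℚ))
    (hq : ∀ p ∈ P, ∀ x y : X → ℤ, R x y →
      MvPolynomial.aeval (fun i => (y i : ℚ)) p ≤ MvPolynomial.aeval (fun i => (x i : ℚ)) p ∧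
      0 ≤ MvPolynomial.aeval (fun i => (x i : ℚ)) p) :
    ((∃ f : ℕ → (X → ℤ), ∀ i : ℕ, R (f i) (f (i + 1))) →
      ∃ g : ℕ → (X → ℤ), ∀ i : ℕ,
        R (g i) (g (i + 1)) ∧
        ∀ p ∈ P, MvPolynomial.aeval (fun j => ((g i) j : ℚ)) p =
          MvPolynomial.aeval (fun j => ((g (i + 1)) j : ℚ)) p) ∧
    (∀ f : ℕ → (X → ℤ), (∀ i : ℕ, R (f i) (f (i + 1))) →
      ∃ N : ℕ, ∀ i ≥ N, ∀ p ∈ P,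
        MvPolynomial.aeval (fun j => ((f i) j : ℚ)) p =
          MvPolynomial.aeval (fun j => ((f (i + 1)) j : ℚ)) p) :=
  quasi_rf_stabilization_general hq
end

section
/- Let n : ℕ and work in the ℚ-vector space ℚⁿ (functions Fin n → ℚ). For a finite set S ⊆ ℚⁿ, let cone(S) denote the set of all nonnegative rational conical combinations of elements of S (finite sums Σ λᵢ sᵢ with λᵢ ∈ ℚ, λᵢ ≥ 0, sᵢ ∈ S), and let conv(S) denote the convex hull of S over ℚ. Then convex polyhedra in V-representation are closed under intersection: for any finite sets R₁, V₁, R₂, V₂ ⊆ ℚⁿ, there exist finite sets R, V ⊆ ℚⁿ such that (cone(R₁) + conv(V₁)) ∩ (cone(R₂) + conv(V₂)) = cone(R) + conv(V), where + denotes the Minkowski sum {a + b : a ∈ A, b ∈ B}. -/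
open Pointwise

/-- The conical hull of a finite set `S` in ℚⁿ: all nonnegative rational
conical combinations of elements of `S`. -/
def coneOf {n : ℕ} (S : Finset (Fin n → ℚ)) : Set (Fin n → ℚ) :=
  {v | ∃ c : (Fin n → ℚ) → ℚ, (∀ s, 0 ≤ c s) ∧ v = ∑ s ∈ S, c s • s}

/-!
A polyhedron `cone R + conv V` in `E` is the slice at height `1` of a finitely generated cone in
`E × K`, and every finitely generated cone in `E × K` that lies above height `0` arises in this way
(rescale each generator to height `0` or `1`). So it suffices that the intersection of two finitely
generated cones `C` and `D` is finitely generated.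

One step of the double description method settles the intersection of a cone with a hyperplane
`ker f`: keep the generators in `ker f`, and for each pair of generators on opposite sides add the
point where the segment joining them crosses `ker f`. Repeating it settles the intersection of `C`
with any linear subspace `S`: as long as `C` is not contained in `S`, some hyperplane contains `S`
but not `C`, and cutting `C` with it lowers the dimension of the linear span of `C`. Finally `C ⊓ D`
is the projection of the intersection of `C × D` with the diagonal.
-/

section CommRing

variable {K E F G : Type*} [CommRing K] [AddCommGroup E] [Module K E]
  [AddCommGroup F] [Module K F] [AddCommGroup G] [Module K G]

/-- The alternating bilinear map `(x, y) ↦ f x • y - f y • x`: it takes values in the kernel of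
`f`, and when `0 < f x` and `f y < 0` its value is, up to scaling, the point where the segment
from `x` to `y` crosses that kernel. -/
def crossing (f : E →ₗ[K] K) : E →ₗ[K] E →ₗ[K] E :=
  LinearMap.lsmul K E ∘ₗ f - (LinearMap.lsmul K E ∘ₗ f).flip

theorem crossing_apply (f : E →ₗ[K] K) (x y : E) : crossing f x y = f x • y - f y • x := rfl

theorem apply_crossing (f : E →ₗ[K] K) (x y : E) : f (crossing f x y) = 0 := by
  simp only [crossing_apply, map_sub, map_smul, smul_eq_mul]
  ring

variable [PartialOrder K]

theorem eq_zero_or_pos_of_mem_hull [IsStrictOrderedRing K] {f : E →ₗ[K] K} {s : Set E}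
    (hs : ∀ x ∈ s, 0 < f x) {x : E} (hx : x ∈ PointedCone.hull K s) : x = 0 ∨ 0 < f x := by
  obtain ⟨c, hcs, hc, rfl⟩ := PointedCone.mem_hull_set.1 hx
  have hpos : ∀ y ∈ c.support, 0 < f (c y • y) := fun y hy => by
    simpa using
      mul_pos ((hc y).lt_of_ne (Finsupp.mem_support_iff.1 hy).symm) (hs y (hcs hy))
  rcases c.support.eq_empty_or_nonempty with hsupp | hsupp
  · exact .inl (by simp [Finsupp.support_eq_empty.1 hsupp])
  · exact .inr (by simpa only [Finsupp.sum, map_sum] using Finset.sum_pos hpos hsupp)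

variable [IsOrderedRing K]

theorem bilin_mem_of_mem_hull (B : E →ₗ[K] F →ₗ[K] G) {s : Set E} {t : Set F}
    {C : PointedCone K G} (h : ∀ x ∈ s, ∀ y ∈ t, B x y ∈ C) {x : E} {y : F}
    (hx : x ∈ PointedCone.hull K s) (hy : y ∈ PointedCone.hull K t) : B x y ∈ C := by
  have hs : ∀ x ∈ s, PointedCone.hull K t ≤ C.comap (B x) :=
    fun x hx => Submodule.span_le.2 (h x hx)
  have ht : PointedCone.hull K s ≤ C.comap (B.flip y) :=
    Submodule.span_le.2 fun x hx => hs x hx hy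
  exact ht hx

theorem fg_span_of_pointedCone_fg {C : PointedCone K E} (hC : C.FG) :
    (Submodule.span K (C : Set E)).FG := by
  obtain ⟨T, hT, rfl⟩ := Submodule.fg_def.1 hC
  rw [Submodule.span_span_of_tower]
  exact Submodule.fg_span hT

/-- The cone in `E × K` whose slice at height `1` is the Minkowski sum of the cone `C` and the
convex hull of `V`: the directions in `C` are put at height `0`, the points of `V` at height `1`. -/
def homogenization (C : PointedCone K E) (V : Set E) : PointedCone K (E × K) :=
  C.map (LinearMap.inl K E K) ⊔ PointedCone.hull K ((fun v => (v, (1 : K))) '' V)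

theorem homogenization_fg {C : PointedCone K E} (hC : C.FG) {V : Set E} (hV : V.Finite) :
    (homogenization C V).FG :=
  (hC.map _).sup (Submodule.fg_span (hV.image _))

theorem snd_nonneg_of_mem_homogenization {C : PointedCone K E} {V : Set E} {y : E × K}
    (hy : y ∈ homogenization C V) : 0 ≤ y.2 := by
  have hle : homogenization C V ≤ (PointedCone.positive K K).comap (LinearMap.snd K E K) := by
    refine sup_le ?_ (Submodule.span_le.2 ?_)
    · rintro _ ⟨r, -, rfl⟩
      exact le_rfl
    · rintro _ ⟨v, -, rfl⟩
      exact zero_le_one' K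
  exact hle hy

end CommRing

section Field

variable {K E : Type*} [Field K] [LinearOrder K] [IsStrictOrderedRing K]
  [AddCommGroup E] [Module K E]

theorem add_mem_of_crossing_mem {f : E →ₗ[K] K} {P N : Set E} {C : PointedCone K E}
    (hP : ∀ p ∈ P, 0 < f p) (hN : ∀ n ∈ N, f n < 0)
    (hC : ∀ p ∈ P, ∀ n ∈ N, crossing f p n ∈ C) {x y : E}
    (hx : x ∈ PointedCone.hull K P) (hy : y ∈ PointedCone.hull K N) (hxy : f (x + y) = 0) :
    x + y ∈ C := by
  have hfy : f y = -f x := by rw [map_add] at hxy; linarith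
  have hx' := eq_zero_or_pos_of_mem_hull hP hx
  have hy' := eq_zero_or_pos_of_mem_hull (f := -f) (by simpa using hN) hy
  rcases hx' with rfl | hpos
  · have : y = 0 := hy'.resolve_right (by simp [hfy])
    simp [this]
  · refine (C.smul_mem_iff hpos).1 ?_
    have hcross := bilin_mem_of_mem_hull (crossing f) hC hx hy
    rwa [crossing_apply, hfy, neg_smul, sub_neg_eq_add, ← smul_add, add_comm] at hcross

theorem hull_inf_ker (T : Set E) (f : E →ₗ[K] K) :
    PointedCone.hull K T ⊓ PointedCone.ofSubmodule (LinearMap.ker f) =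
      PointedCone.hull K ({t ∈ T | f t = 0} ∪
        Set.image2 (crossing f · ·) {t ∈ T | 0 < f t} {t ∈ T | f t < 0}) := by
  set Z := {t ∈ T | f t = 0}
  set P := {t ∈ T | 0 < f t}
  set N := {t ∈ T | f t < 0}
  refine le_antisymm ?_ (Submodule.span_le.2 ?_)
  · rintro x ⟨hxT, hfx⟩
    have hT : T ⊆ Z ∪ (P ∪ N) := fun t ht => by
      rcases lt_trichotomy (f t) 0 with h | h | h <;> simp [Z, P, N, ht, h]
    have hsplit := Submodule.span_mono hT hxT
    simp only [Submodule.span_union, Submodule.mem_sup] at hsplit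
    obtain ⟨z, hz, _, ⟨p, hp, n, hn, rfl⟩, rfl⟩ := hsplit
    have hfz : f z = 0 :=
      (Submodule.span_le.2 fun t ht => ht.2 :
        PointedCone.hull K Z ≤ PointedCone.ofSubmodule (LinearMap.ker f)) hz
    have hfpn : f (p + n) = 0 := by simpa [hfz] using hfx
    refine add_mem (Submodule.span_mono Set.subset_union_left hz) ?_
    exact add_mem_of_crossing_mem (P := P) (N := N) (fun t ht => ht.2) (fun t ht => ht.2)
      (fun p hp n hn => PointedCone.subset_hull (.inr ⟨p, hp, n, hn, rfl⟩)) hp hn hfpn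
  · rintro _ (⟨ht, hft⟩ | ⟨p, ⟨hp, hfp⟩, n, ⟨hn, hfn⟩, rfl⟩)
    · exact ⟨PointedCone.subset_hull ht, hft⟩
    · refine ⟨?_, apply_crossing f p n⟩
      have hmem := add_mem (PointedCone.smul_mem _ hfp.le (PointedCone.subset_hull hn))
        (PointedCone.smul_mem _ (neg_nonneg.2 hfn.le) (PointedCone.subset_hull hp))
      simpa [crossing_apply, sub_eq_add_neg] using hmem

theorem pointedCone_fg_inf_ker {C : PointedCone K E} (hC : C.FG) (f : E →ₗ[K] K) :
    (C ⊓ PointedCone.ofSubmodule (LinearMap.ker f)).FG := by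
  obtain ⟨T, hT, rfl⟩ := Submodule.fg_def.1 hC
  rw [hull_inf_ker]
  exact Submodule.fg_span ((hT.sep _).union (.image2 _ (hT.sep _) (hT.sep _)))

theorem pointedCone_fg_inf_ofSubmodule {C : PointedCone K E} (hC : C.FG) (S : Submodule K E) :
    (C ⊓ PointedCone.ofSubmodule S).FG := by
  induction hd : Module.finrank K (Submodule.span K (C : Set E)) using Nat.strong_induction_on
    generalizing C with
  | _ d ih =>
    by_cases hCS : C ≤ PointedCone.ofSubmodule S
    · rwa [inf_eq_left.2 hCS]
    · obtain ⟨x, hxC, hxS⟩ := SetLike.not_le_iff_exists.1 hCS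
      obtain ⟨f, hfx, hSf⟩ := Submodule.exists_le_ker_of_notMem hxS
      let D := C ⊓ PointedCone.ofSubmodule (LinearMap.ker f)
      have hDS : C ⊓ PointedCone.ofSubmodule S = D ⊓ PointedCone.ofSubmodule S := by
        rw [inf_assoc, inf_eq_right.2 (PointedCone.ofSubmodule_le_ofSubmodule.2 hSf)]
      have hspan : Submodule.span K (D : Set E) < Submodule.span K (C : Set E) := by
        refine (Submodule.span_mono fun y hy => hy.1).lt_of_not_ge fun hle => hfx ?_
        have hDf : Submodule.span K (D : Set E) ≤ LinearMap.ker f :=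
          Submodule.span_le.2 fun y hy => hy.2
        exact hDf (hle (Submodule.subset_span hxC))
      have := Module.Finite.of_fg (fg_span_of_pointedCone_fg hC)
      rw [hDS]
      exact ih _ (hd ▸ Submodule.finrank_lt_finrank_of_lt hspan) (pointedCone_fg_inf_ker hC f) rfl

theorem pointedCone_fg_inf {C D : PointedCone K E} (hC : C.FG) (hD : D.FG) : (C ⊓ D).FG := by
  let diagonal := LinearMap.ker (LinearMap.fst K E E - LinearMap.snd K E E)
  have hmap : C ⊓ D = PointedCone.map (LinearMap.fst K E E)
      (C.prod D ⊓ PointedCone.ofSubmodule diagonal) := by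
    ext x
    constructor
    · rintro ⟨hxC, hxD⟩
      exact ⟨(x, x), ⟨⟨hxC, hxD⟩, sub_self x⟩, rfl⟩
    · rintro ⟨⟨y, z⟩, ⟨⟨hy, hz⟩, hyz⟩, rfl⟩
      obtain rfl : y = z := sub_eq_zero.1 hyz
      exact ⟨hy, hz⟩
  rw [hmap]
  exact (pointedCone_fg_inf_ofSubmodule (hC.prod hD) diagonal).map _

theorem mk_one_mem_hull_iff {V : Set E} {x : E} :
    (x, (1 : K)) ∈ PointedCone.hull K ((fun v => (v, (1 : K))) '' V) ↔ x ∈ convexHull K V := by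
  constructor
  · intro hx
    obtain ⟨c, hcV, hc, hsum⟩ := PointedCone.mem_hull_set.1 hx
    have hV : ∀ y ∈ c.support, y.1 ∈ V ∧ y.2 = 1 := fun y hy => by
      obtain ⟨v, hv, rfl⟩ := hcV hy
      exact ⟨hv, rfl⟩
    obtain ⟨hfst, hsnd⟩ := Prod.ext_iff.1 hsum
    simp only [Finsupp.sum, Prod.fst_sum, Prod.snd_sum, Prod.smul_fst, Prod.smul_snd,
      smul_eq_mul] at hfst hsnd
    have hweights : ∑ y ∈ c.support, c y = 1 := by
      rw [← hsnd]
      exact Finset.sum_congr rfl fun y hy => by rw [(hV y hy).2, mul_one]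
    rw [← hfst]
    exact (convex_convexHull K V).sum_mem (fun y _ => hc y) hweights
      fun y hy => subset_convexHull K V (hV y hy).1
  · intro hx
    let C := PointedCone.hull K ((fun v : E => (v, (1 : K))) '' V)
    have hconv : Convex K {v : E | (v, (1 : K)) ∈ C} := fun a ha b hb s t hs ht hst => by
      simpa [hst] using C.convex ha hb hs ht hst
    have hV : V ⊆ {v : E | (v, (1 : K)) ∈ C} := fun v hv =>
      PointedCone.subset_hull ⟨v, hv, rfl⟩
    exact convexHull_min hV hconv hx

theorem mk_one_mem_homogenization_iff {C : PointedCone K E} {V : Set E} {x : E} :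
    (x, (1 : K)) ∈ homogenization C V ↔ x ∈ (C : Set E) + convexHull K V := by
  simp only [homogenization, Submodule.mem_sup, Set.mem_add, ← mk_one_mem_hull_iff (K := K)]
  constructor
  · rintro ⟨_, ⟨r, hr, rfl⟩, ⟨v, t⟩, hv, hsum⟩
    obtain ⟨hsum, ht⟩ : r + v = x ∧ t = 1 := by simpa using hsum
    exact ⟨r, hr, v, ht ▸ hv, hsum⟩
  · rintro ⟨r, hr, v, hv, rfl⟩
    exact ⟨(r, 0), ⟨r, hr, rfl⟩, (v, 1), hv, by simp⟩

theorem hull_eq_homogenization {T : Set (E × K)} (hT : ∀ y ∈ T, 0 ≤ y.2) :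
    PointedCone.hull K T =
      homogenization (PointedCone.hull K (Prod.fst '' {y ∈ T | y.2 = 0}))
        ((fun y => y.2⁻¹ • y.1) '' {y ∈ T | 0 < y.2}) := by
  have hscale : ∀ y : E × K, 0 < y.2 → (y.2⁻¹ • y.1, (1 : K)) = y.2⁻¹ • y := fun y hy =>
    Prod.ext rfl (inv_mul_cancel₀ hy.ne').symm
  refine le_antisymm (Submodule.span_le.2 fun y hy => ?_) (sup_le ?_ (Submodule.span_le.2 ?_))
  · rcases (hT y hy).eq_or_lt with h | h
    · exact Submodule.mem_sup_left
        ⟨y.1, PointedCone.subset_hull ⟨y, ⟨hy, h.symm⟩, rfl⟩, Prod.ext rfl h⟩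
    · refine Submodule.mem_sup_right ((PointedCone.smul_mem_iff _ (inv_pos.2 h)).1 ?_)
      rw [← hscale y h]
      exact PointedCone.subset_hull ⟨_, ⟨y, ⟨hy, h⟩, rfl⟩, rfl⟩
  · refine Submodule.map_le_iff_le_comap.2 (Submodule.span_le.2 ?_)
    rintro _ ⟨⟨r, t⟩, ⟨hy, rfl : t = 0⟩, rfl⟩
    exact PointedCone.subset_hull hy
  · rintro _ ⟨_, ⟨y, ⟨hy, h⟩, rfl⟩, rfl⟩
    simp only [hscale y h]
    exact PointedCone.smul_mem _ (inv_pos.2 h).le (PointedCone.subset_hull hy)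

theorem exists_finset_eq_homogenization {C : PointedCone K (E × K)} (hC : C.FG)
    (hnonneg : ∀ y ∈ C, 0 ≤ y.2) :
    ∃ R V : Finset E, C = homogenization (PointedCone.hull K (R : Set E)) V := by
  obtain ⟨T, hT, rfl⟩ := Submodule.fg_def.1 hC
  have hR := (hT.sep fun y => y.2 = 0).image Prod.fst
  have hV := (hT.sep fun y => 0 < y.2).image fun y => y.2⁻¹ • y.1
  refine ⟨hR.toFinset, hV.toFinset, ?_⟩
  rw [hR.coe_toFinset, hV.coe_toFinset]
  exact hull_eq_homogenization fun y hy => hnonneg y (PointedCone.subset_hull hy)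

theorem polyhedra_Vrep_closed_under_intersection_general (R₁ V₁ R₂ V₂ : Finset E) :
    ∃ R V : Finset E,
      ((PointedCone.hull K (R₁ : Set E) : Set E) + convexHull K (V₁ : Set E)) ∩
        ((PointedCone.hull K (R₂ : Set E) : Set E) + convexHull K (V₂ : Set E)) =
      (PointedCone.hull K (R : Set E) : Set E) + convexHull K (V : Set E) := by
  have hfg (R V : Finset E) : (homogenization (PointedCone.hull K (R : Set E)) (V : Set E)).FG :=
    homogenization_fg (Submodule.fg_span R.finite_toSet) V.finite_toSet
  obtain ⟨R, V, h⟩ := exists_finset_eq_homogenization (pointedCone_fg_inf (hfg R₁ V₁) (hfg R₂ V₂))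
    fun y hy => snd_nonneg_of_mem_homogenization hy.1
  refine ⟨R, V, Set.ext fun x => ?_⟩
  simp only [Set.mem_inter_iff, ← mk_one_mem_homogenization_iff, ← h, Submodule.mem_inf]

end Field

theorem coneOf_eq_hull {n : ℕ} (S : Finset (Fin n → ℚ)) :
    coneOf S = PointedCone.hull ℚ (S : Set (Fin n → ℚ)) := by
  ext x
  constructor
  · rintro ⟨c, hc, rfl⟩
    exact sum_mem fun s hs => PointedCone.smul_mem _ (hc s) (PointedCone.subset_hull hs)
  · intro hx
    obtain ⟨c, -, rfl⟩ := Submodule.mem_span_finset.1 hx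
    exact ⟨fun s => c s, fun s => (c s).2, rfl⟩

/-- Convex polyhedra in V-representation are closed under intersection. -/
theorem polyhedra_Vrep_closed_under_intersection
    (n : ℕ) (R₁ V₁ R₂ V₂ : Finset (Fin n → ℚ)) :
    ∃ R V : Finset (Fin n → ℚ),
      (coneOf R₁ + convexHull ℚ (V₁ : Set (Fin n → ℚ))) ∩
        (coneOf R₂ + convexHull ℚ (V₂ : Set (Fin n → ℚ))) =
      coneOf R + convexHull ℚ (V : Set (Fin n → ℚ)) := by
  simpa only [coneOf_eq_hull] using polyhedra_Vrep_closed_under_intersection_general R₁ V₁ R₂ V₂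
end
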